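/- (Wilf's factorization) Let P be a finite upper semilattice (every two elements have a least upper bound) enumerated as p₁,…,p_n so that p_i ≤ p_j implies i ≤ j, and let E be the n×n matrix with entries e_{ij} = 1 if p_i ≤ p_j and 0 otherwise. Let f, g : P → ℝ be functions satisfying f(p_i) = ∑_{j : p_i ≤ p_j} g(p_j) for all i. Let F be the n×n matrix with entries f_{ij} = f(p_i ∨ p_j) and G the diagonal matrix with entries g(p_i). Then F = E G Eᵀ. -/

import Mathlib

open scoped Classical
open Matrix

/-! The upper bounds of `x ⊔ y` are the common upper bounds of `x` and `y`, so the indicator of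
`x ⊔ y ≤ z` is the product of the indicators of `x ≤ z` and `y ≤ z`. Summing `g z` against this
product over all `z` turns `f (x ⊔ y)` into an entry of the matrix product. -/

section SemilatticeSup

variable {P R : Type*} [SemilatticeSup P] [DecidableLE P] [NonAssocSemiring R]

theorem ite_le_mul_mul_ite_le_eq_ite_sup_le (x y z : P) (r : R) :
    (if x ≤ z then 1 else 0) * r * (if y ≤ z then 1 else 0) = if x ⊔ y ≤ z then r else 0 := by
  simp only [sup_le_iff, ite_and, ite_mul, one_mul, zero_mul, mul_ite, mul_one, mul_zero]
  split_ifs <;> rfl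

theorem apply_sup_eq_sum_ite_mul_mul_ite [Fintype P] {f g : P → R}
    (hfg : ∀ x, f x = ∑ y, if x ≤ y then g y else 0) (x y : P) :
    f (x ⊔ y) = ∑ z, (if x ≤ z then 1 else 0) * g z * (if y ≤ z then 1 else 0) := by
  simp only [ite_le_mul_mul_ite_le_eq_ite_sup_le, hfg]

theorem wilf_factorization_general {ι : Type*} [Fintype ι] [DecidableEq ι] [Fintype P]
    (p : ι ≃ P) (f g : P → R) (hfg : ∀ x, f x = ∑ y, if x ≤ y then g y else 0)
    (E : Matrix ι ι R) (hE : ∀ i j, E i j = if p i ≤ p j then 1 else 0)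
    (F : Matrix ι ι R) (hF : ∀ i j, F i j = f (p i ⊔ p j))
    (G : Matrix ι ι R) (hG : G = diagonal fun i => g (p i)) :
    F = E * G * Eᵀ := by
  ext i j
  calc
    F i j = ∑ z, (if p i ≤ z then 1 else 0) * g z * (if p j ≤ z then 1 else 0) := by
      rw [hF, apply_sup_eq_sum_ite_mul_mul_ite hfg]
    _ = ∑ k, E i k * g (p k) * E j k := by
      rw [← p.sum_comp]
      simp only [hE]
    _ = (E * G * Eᵀ) i j := by
      rw [hG, mul_apply]
      simp only [mul_diagonal, transpose_apply]

end SemilatticeSup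

/-- **Wilf's factorization.** Let `P` be a finite upper semilattice enumerated as
`p 0, …, p (n-1)` so that `p i ≤ p j` implies `i ≤ j`, let `E` be the zeta matrix
`e i j = [p i ≤ p j]`, and let `f g : P → ℝ` satisfy `f (p i) = ∑_{j : p i ≤ p j} g (p j)`.
If `F` is the matrix with entries `f (p i ⊔ p j)` and `G` is the diagonal matrix with
entries `g (p i)`, then `F = E * G * Eᵀ`. -/
theorem wilf_factorization {n : ℕ} {P : Type*} [Fintype P] [SemilatticeSup P]
    (p : Fin n ≃ P) (hp : ∀ i j : Fin n, p i ≤ p j → i ≤ j)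
    (f g : P → ℝ) (hfg : ∀ x : P, f x = ∑ y : P, if x ≤ y then g y else 0)
    (E : Matrix (Fin n) (Fin n) ℝ) (hE : ∀ i j, E i j = if p i ≤ p j then 1 else 0)
    (F : Matrix (Fin n) (Fin n) ℝ) (hF : ∀ i j, F i j = f (p i ⊔ p j))
    (G : Matrix (Fin n) (Fin n) ℝ) (hG : G = Matrix.diagonal fun i => g (p i)) :
    F = E * G * Eᵀ :=
  wilf_factorization_general p f g hfg E hE F hF G hG
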